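/- Let u be a smooth vector field on ℝⁿ, N a unit vector field, and Q^{ij} = δ^{ij} − N^i N^j the tangential projection. For any integer r ≥ 1 there is a constant C (depending only on n, r) such that pointwise |∇^r u|² ≤ C ( Σ_k Q^{i₁j₁}⋯Q^{i_r j_r} ∂^r_{i₁⋯i_r} u_k ∂^r_{j₁⋯j_r} u_k + |∇^{r−1} div u|² + |∇^{r−1} curl u|² ). -/

import Mathlib

open MeasureTheory

/-- Partial derivative ∂_i. -/
noncomputable def pd (n : ℕ) (i : Fin n) (f : (Fin n → ℝ) → ℝ) (x : Fin n → ℝ) : ℝ :=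
  fderiv ℝ f x (Pi.single i 1)

/-- Iterated partial derivative ∂_{I 0} ⋯ ∂_{I (r-1)}. -/
noncomputable def pdm (n : ℕ) :
    (r : ℕ) → (Fin r → Fin n) → ((Fin n → ℝ) → ℝ) → ((Fin n → ℝ) → ℝ)
  | 0, _, f => f
  | r + 1, I, f => pd n (I 0) (pdm n r (fun j => I j.succ) f)

/-!
Fix a point and let `Q = 1 - N Nᵀ`. For a first derivative matrix `M i k = ∂ᵢ uₖ` the bound is
elementary: only `Mᵀ N` is not controlled by `Q M`; up to the curl it equals `M N`, whose tangential
part is controlled by `Q M` and whose normal part is `Nᵀ M N = tr M - tr (Q M)`.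

For higher derivatives the projection is inserted one derivative slot at a time, applying the matrix
bound in that slot. The slots already projected do no harm, since a tensor power of `Q` is an
orthogonal projection and therefore does not increase the norms of the divergence and of the curl.
-/

open Matrix Topology
open scoped ContDiff Kronecker

namespace DivCurl

section OrthogonalProjection

variable {α R : Type*} [Fintype α] [CommRing R] {P : Matrix α α R}

theorem mulVec_dotProduct_mulVec (hs : P.IsSymm) (hi : IsIdempotentElem P) (v w : α → R) :
    (P *ᵥ v) ⬝ᵥ (P *ᵥ w) = v ⬝ᵥ P *ᵥ w := by
  rw [dotProduct_mulVec, vecMul_mulVec, hs.eq, hi.eq, ← dotProduct_mulVec]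

theorem sum_mulVec_sq (hs : P.IsSymm) (hi : IsIdempotentElem P) (v : α → R) :
    ∑ a, (P *ᵥ v) a ^ 2 = v ⬝ᵥ P *ᵥ v := by
  rw [← mulVec_dotProduct_mulVec hs hi]
  simp only [dotProduct, sq]

theorem sum_mulVec_sq_le [LinearOrder R] [IsStrictOrderedRing R] (hs : P.IsSymm)
    (hi : IsIdempotentElem P) (v : α → R) : ∑ a, (P *ᵥ v) a ^ 2 ≤ ∑ a, v a ^ 2 := by
  classical
  have h_compl := sum_mulVec_sq (isSymm_one.sub hs) hi.one_sub v
  have h_nonneg : 0 ≤ ∑ a, ((1 - P) *ᵥ v) a ^ 2 := Finset.sum_nonneg fun a _ => sq_nonneg _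
  rw [h_compl, sub_mulVec, one_mulVec, dotProduct_sub, ← sum_mulVec_sq hs hi, sub_nonneg]
    at h_nonneg
  simpa only [dotProduct, ← sq] using h_nonneg

end OrthogonalProjection

section TangentialProjection

variable {ι R : Type*} [DecidableEq ι] [CommRing R]

/-- The projection `Q^{ij} = δ^{ij} - N^i N^j`, orthogonal onto the hyperplane `N^⊥` when `N` is a
unit vector. -/
def tangentialProjection (N : ι → R) : Matrix ι ι R :=
  1 - vecMulVec N N

theorem tangentialProjection_apply (N : ι → R) (i j : ι) :
    tangentialProjection N i j = (if i = j then 1 else 0) - N i * N j := by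
  rw [tangentialProjection, Matrix.sub_apply, one_apply, vecMulVec_apply]

theorem isSymm_tangentialProjection (N : ι → R) : (tangentialProjection N).IsSymm :=
  isSymm_one.sub (transpose_vecMulVec N N)

variable [Fintype ι]

theorem isIdempotentElem_tangentialProjection {N : ι → R} (hN : ∑ i, N i ^ 2 = 1) :
    IsIdempotentElem (tangentialProjection N) := by
  have hNN : N ⬝ᵥ N = 1 := by simpa only [dotProduct, ← sq] using hN
  refine IsIdempotentElem.one_sub ?_
  rw [IsIdempotentElem, vecMulVec_mul_vecMulVec, hNN, one_smul]

theorem sum_tangentialProjection_mul_sq {N : ι → R} (hN : ∑ i, N i ^ 2 = 1)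
    (M : Matrix ι ι R) :
    ∑ i, ∑ k, (tangentialProjection N * M) i k ^ 2 =
      ∑ k, M.col k ⬝ᵥ tangentialProjection N *ᵥ M.col k := by
  rw [Finset.sum_comm]
  exact Finset.sum_congr rfl fun k _ => sum_mulVec_sq (isSymm_tangentialProjection N)
    (isIdempotentElem_tangentialProjection hN) (M.col k)

theorem sum_sq_eq_tangential_add_normal (N v : ι → R) :
    ∑ i, v i ^ 2 = v ⬝ᵥ tangentialProjection N *ᵥ v + (N ⬝ᵥ v) ^ 2 := by
  rw [tangentialProjection, sub_mulVec, one_mulVec, vecMulVec_mulVec, dotProduct_sub,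
    op_smul_eq_smul, dotProduct_smul, smul_eq_mul, dotProduct_comm v N, sq (N ⬝ᵥ v),
    sub_add_cancel]
  simp only [dotProduct, sq]

theorem dotProduct_mulVec_eq_trace_sub (N : ι → R) (M : Matrix ι ι R) :
    N ⬝ᵥ M *ᵥ N = M.trace - (tangentialProjection N * M).trace := by
  rw [tangentialProjection, sub_mul, one_mul, trace_sub, vecMulVec_mul, trace_vecMulVec,
    dotProduct_mulVec, dotProduct_comm, sub_sub_cancel]

end TangentialProjection

section MatrixEstimate

variable {ι R : Type*} [Fintype ι] [CommRing R] [LinearOrder R] [IsStrictOrderedRing R]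

theorem sum_mulVec_sq_le_of_unit {κ : Type*} [Fintype κ] {N : ι → R} (hN : ∑ i, N i ^ 2 = 1)
    (A : Matrix κ ι R) : ∑ i, (A *ᵥ N) i ^ 2 ≤ ∑ i, ∑ j, A i j ^ 2 := by
  refine Finset.sum_le_sum fun i _ => ?_
  simpa only [hN, mul_one, mulVec, dotProduct] using
    Finset.sum_mul_sq_le_sq_mul_sq Finset.univ (A i) N

theorem trace_sq_le (A : Matrix ι ι R) :
    A.trace ^ 2 ≤ Fintype.card ι * ∑ i, ∑ j, A i j ^ 2 :=
  calc A.trace ^ 2 ≤ Fintype.card ι * ∑ i, A i i ^ 2 := sq_sum_le_card_mul_sum_sq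
    _ ≤ Fintype.card ι * ∑ i, ∑ j, A i j ^ 2 := by
      gcongr with i
      exact Finset.single_le_sum (f := fun j => A i j ^ 2) (fun j _ => sq_nonneg _)
        (Finset.mem_univ i)

theorem sum_vecMul_sq_le {N : ι → R} (hN : ∑ i, N i ^ 2 = 1) (M : Matrix ι ι R) :
    ∑ k, (N ᵥ* M) k ^ 2 ≤
      2 * ∑ k, (M *ᵥ N) k ^ 2 + 2 * ∑ i, ∑ j, (M i j - M j i) ^ 2 := by
  have h_split (k : ι) : (N ᵥ* M) k = (M *ᵥ N) k + ((Mᵀ - M) *ᵥ N) k := by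
    rw [sub_mulVec, mulVec_transpose, Pi.sub_apply, add_sub_cancel]
  calc ∑ k, (N ᵥ* M) k ^ 2
      ≤ ∑ k, 2 * ((M *ᵥ N) k ^ 2 + ((Mᵀ - M) *ᵥ N) k ^ 2) :=
        Finset.sum_le_sum fun k _ => h_split k ▸ add_sq_le
    _ = 2 * ∑ k, (M *ᵥ N) k ^ 2 + 2 * ∑ k, ((Mᵀ - M) *ᵥ N) k ^ 2 := by
        rw [← Finset.mul_sum, Finset.sum_add_distrib, mul_add]
    _ ≤ 2 * ∑ k, (M *ᵥ N) k ^ 2 + 2 * ∑ i : ι, ∑ j : ι, (Mᵀ - M) i j ^ 2 := by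
        linarith [sum_mulVec_sq_le_of_unit hN (Mᵀ - M)]
    _ = _ := by
        rw [Finset.sum_comm]
        rfl

variable [DecidableEq ι] {N : ι → R}

theorem sum_mulVec_normal_sq_le (hN : ∑ i, N i ^ 2 = 1) (M : Matrix ι ι R) :
    ∑ i, (M *ᵥ N) i ^ 2 ≤
      (2 * Fintype.card ι + 1) * ∑ k, M.col k ⬝ᵥ tangentialProjection N *ᵥ M.col k +
        2 * M.trace ^ 2 := by
  set Q := tangentialProjection N
  have h_tangential : (M *ᵥ N) ⬝ᵥ Q *ᵥ (M *ᵥ N) ≤ ∑ i, ∑ k, (Q * M) i k ^ 2 := by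
    rw [← sum_mulVec_sq (isSymm_tangentialProjection N) (isIdempotentElem_tangentialProjection hN),
      mulVec_mulVec]
    exact sum_mulVec_sq_le_of_unit hN _
  have h_normal : (N ⬝ᵥ M *ᵥ N) ^ 2 ≤
      2 * (M.trace ^ 2 + Fintype.card ι * ∑ i, ∑ k, (Q * M) i k ^ 2) :=
    calc (N ⬝ᵥ M *ᵥ N) ^ 2 = (M.trace + -(Q * M).trace) ^ 2 := by
          rw [dotProduct_mulVec_eq_trace_sub, sub_eq_add_neg]
      _ ≤ 2 * (M.trace ^ 2 + (Q * M).trace ^ 2) := by rw [← neg_sq (Q * M).trace]; exact add_sq_le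
      _ ≤ _ := by gcongr; exact trace_sq_le _
  rw [sum_sq_eq_tangential_add_normal N (M *ᵥ N), ← sum_tangentialProjection_mul_sq hN]
  linarith

theorem matrix_div_curl_estimate (hN : ∑ i, N i ^ 2 = 1) (M : Matrix ι ι R) :
    ∑ i, ∑ k, M i k ^ 2 ≤ (4 * Fintype.card ι + 4) *
      (∑ k, M.col k ⬝ᵥ tangentialProjection N *ᵥ M.col k + M.trace ^ 2 +
        ∑ i, ∑ j, (M i j - M j i) ^ 2) := by
  set E := ∑ k, M.col k ⬝ᵥ tangentialProjection N *ᵥ M.col k with hE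
  set A := ∑ i, ∑ j, (M i j - M j i) ^ 2
  have h_pythagoras : ∑ i, ∑ k, M i k ^ 2 = E + ∑ k, (N ᵥ* M) k ^ 2 := by
    rw [Finset.sum_comm, hE, ← Finset.sum_add_distrib]
    exact Finset.sum_congr rfl fun k _ => sum_sq_eq_tangential_add_normal N (M.col k)
  have hE_nonneg : 0 ≤ E := by rw [hE, ← sum_tangentialProjection_mul_sq hN]; positivity
  have hA_nonneg : 0 ≤ A := by positivity
  have h_card : (0 : R) ≤ Fintype.card ι := Nat.cast_nonneg _
  nlinarith [sum_vecMul_sq_le hN M, sum_mulVec_normal_sq_le hN M, sq_nonneg M.trace,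
    mul_nonneg h_card (sq_nonneg M.trace), mul_nonneg h_card hA_nonneg]

end MatrixEstimate

section SlotEstimate

variable {ι α R : Type*} [Fintype ι] [Fintype α] [CommRing R] {P : Matrix α α R}

theorem dotProduct_kronecker_mulVec (Q : Matrix ι ι R) (hs : P.IsSymm)
    (hi : IsIdempotentElem P) (t : ι × α → R) :
    t ⬝ᵥ (Q ⊗ₖ P) *ᵥ t = ∑ a, (fun i => (P *ᵥ fun b => t (i, b)) a) ⬝ᵥ
      Q *ᵥ fun i => (P *ᵥ fun b => t (i, b)) a :=
  calc t ⬝ᵥ (Q ⊗ₖ P) *ᵥ t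
      = ∑ i, ∑ j, Q i j * ((fun a => t (i, a)) ⬝ᵥ P *ᵥ fun b => t (j, b)) := by
        simp only [dotProduct, mulVec, kronecker_apply, Fintype.sum_prod_type, Finset.mul_sum]
        refine Finset.sum_congr rfl fun i _ => ?_
        rw [Finset.sum_comm]
        refine Finset.sum_congr rfl fun j _ => Finset.sum_congr rfl fun a _ =>
          Finset.sum_congr rfl fun b _ => ?_
        ring
    _ = ∑ i, ∑ j, ∑ a, (P *ᵥ fun b => t (i, b)) a * (Q i j * (P *ᵥ fun b => t (j, b)) a) := by
        refine Finset.sum_congr rfl fun i _ => Finset.sum_congr rfl fun j _ => ?_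
        rw [← mulVec_dotProduct_mulVec hs hi, dotProduct, Finset.mul_sum]
        exact Finset.sum_congr rfl fun a _ => mul_left_comm _ _ _
    _ = _ := by
        simp only [dotProduct, mulVec.eq_def Q, Finset.mul_sum]
        exact Finset.sum_comm_cycle

variable [LinearOrder R] [IsStrictOrderedRing R] [DecidableEq ι]

/- The matrix estimate is applied, for each `a`, to the components at `a` of the tensor projected
by `P`. -/
theorem slot_div_curl_estimate {N : ι → R} (hN : ∑ i, N i ^ 2 = 1) (hs : P.IsSymm)
    (hi : IsIdempotentElem P) (T : ι × α → ι → R) :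
    ∑ i, ∑ k, (fun a => T (i, a) k) ⬝ᵥ P *ᵥ (fun a => T (i, a) k) ≤ (4 * Fintype.card ι + 4) *
      (∑ k, (T · k) ⬝ᵥ (tangentialProjection N ⊗ₖ P) *ᵥ (T · k) +
        ∑ a, (∑ i, T (i, a) i) ^ 2 + ∑ a, ∑ i, ∑ j, (T (i, a) j - T (j, a) i) ^ 2) := by
  let M (a : α) : Matrix ι ι R := of fun i k => (P *ᵥ fun b => T (i, b) k) a
  have h_trace : ∑ a, (M a).trace ^ 2 ≤ ∑ a, (∑ i, T (i, a) i) ^ 2 := by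
    have h (a : α) : (M a).trace = (P *ᵥ fun b => ∑ i, T (i, b) i) a := by
      simp only [M, trace, diag_apply, of_apply, mulVec, dotProduct, Finset.mul_sum]
      rw [Finset.sum_comm]
    simpa only [h] using sum_mulVec_sq_le hs hi fun a => ∑ i, T (i, a) i
  have h_curl : ∑ a, ∑ i, ∑ j, (M a i j - M a j i) ^ 2 ≤
      ∑ a, ∑ i, ∑ j, (T (i, a) j - T (j, a) i) ^ 2 := by
    have h (a : α) (i j : ι) : M a i j - M a j i = (P *ᵥ fun b => T (i, b) j - T (j, b) i) a :=
      (congrFun (mulVec_sub P (fun b => T (i, b) j) fun b => T (j, b) i) a).symm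
    calc ∑ a, ∑ i, ∑ j, (M a i j - M a j i) ^ 2
        = ∑ i, ∑ j, ∑ a, (P *ᵥ fun b => T (i, b) j - T (j, b) i) a ^ 2 := by
          simp only [h]
          exact Finset.sum_comm_cycle.symm
      _ ≤ ∑ i, ∑ j, ∑ a, (T (i, a) j - T (j, a) i) ^ 2 :=
          Finset.sum_le_sum fun i _ => Finset.sum_le_sum fun j _ => sum_mulVec_sq_le hs hi _
      _ = _ := Finset.sum_comm_cycle
  calc ∑ i, ∑ k, (fun a => T (i, a) k) ⬝ᵥ P *ᵥ (fun a => T (i, a) k)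
      = ∑ a, ∑ i, ∑ k, M a i k ^ 2 := by
        simp only [← sum_mulVec_sq hs hi]
        exact Finset.sum_comm_cycle
    _ ≤ ∑ a, (4 * Fintype.card ι + 4) *
          (∑ k, (M a).col k ⬝ᵥ tangentialProjection N *ᵥ (M a).col k + (M a).trace ^ 2 +
            ∑ i, ∑ j, (M a i j - M a j i) ^ 2) :=
        Finset.sum_le_sum fun a _ => matrix_div_curl_estimate hN (M a)
    _ = (4 * Fintype.card ι + 4) *
          (∑ k, (T · k) ⬝ᵥ (tangentialProjection N ⊗ₖ P) *ᵥ (T · k) +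
            ∑ a, (M a).trace ^ 2 + ∑ a, ∑ i, ∑ j, (M a i j - M a j i) ^ 2) := by
        simp only [dotProduct_kronecker_mulVec _ hs hi]
        rw [← Finset.mul_sum, Finset.sum_add_distrib, Finset.sum_add_distrib, Finset.sum_comm]
        rfl
    _ ≤ _ := by gcongr

end SlotEstimate

section TensorPower

variable {ι R : Type*} [CommRing R]

/-- The `r`-th tensor power of a matrix, acting on tensors with `r` indices. -/
def tensorPower (P : Matrix ι ι R) (r : ℕ) : Matrix (Fin r → ι) (Fin r → ι) R :=
  of fun I J => ∏ m, P (I m) (J m)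

theorem tensorPower_zero (P : Matrix ι ι R) [DecidableEq ι] : tensorPower P 0 = 1 := by
  ext I J
  simp [tensorPower, one_apply, Subsingleton.elim I J]

theorem tensorPower_succ (P : Matrix ι ι R) (r : ℕ) :
    (tensorPower P (r + 1)).submatrix (Fin.consEquiv fun _ => ι) (Fin.consEquiv fun _ => ι) =
      P ⊗ₖ tensorPower P r := by
  ext ⟨i, I⟩ ⟨j, J⟩
  simp [tensorPower, Fin.prod_univ_succ]

theorem isSymm_tensorPower {P : Matrix ι ι R} (hs : P.IsSymm) (r : ℕ) :
    (tensorPower P r).IsSymm :=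
  IsSymm.ext fun I J =>
    show ∏ m, P (J m) (I m) = ∏ m, P (I m) (J m) from
      Finset.prod_congr rfl fun m _ => hs.apply (I m) (J m)

theorem isIdempotentElem_tensorPower [Fintype ι] {P : Matrix ι ι R} (hi : IsIdempotentElem P)
    (r : ℕ) : IsIdempotentElem (tensorPower P r) := by
  ext I J
  calc ∑ K : Fin r → ι, (∏ m, P (I m) (K m)) * ∏ m, P (K m) (J m)
      = ∏ m, ∑ k, P (I m) k * P k (J m) := by
        simp only [Finset.prod_univ_sum, Fintype.piFinset_univ, Finset.prod_mul_distrib]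
    _ = ∏ m, P (I m) (J m) := Finset.prod_congr rfl fun m _ => congrFun₂ hi (I m) (J m)

end TensorPower

section SymmTensor

variable {ι X : Type*} {r : ℕ}

/-- Invariance of a tensor under permutations of its indices, as for the derivatives `∂_I` of a
smooth function. The values may carry a further index, on which nothing is assumed. -/
def IsSymmTensor (T : (Fin r → ι) → X) : Prop :=
  ∀ (σ : Equiv.Perm (Fin r)) (I : Fin r → ι), T (I ∘ σ) = T I

variable {T : (Fin (r + 1) → ι) → X}

theorem IsSymmTensor.apply_snoc (hT : IsSymmTensor T) (I : Fin r → ι) (i : ι) :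
    T (Fin.snoc I i) = T (Fin.cons i I) := by
  rw [Fin.snoc_eq_cons_rotate]
  exact hT (finRotate (r + 1)) (Fin.cons i I)

theorem IsSymmTensor.cons (hT : IsSymmTensor T) (i : ι) :
    IsSymmTensor fun I => T (Fin.cons i I) := by
  intro σ I
  beta_reduce
  rw [← hT (Equiv.Perm.decomposeFin.symm (0, σ)) (Fin.cons i I)]
  congr 1
  ext m
  cases m using Fin.cases <;> simp

end SymmTensor

section TensorEstimate

variable {ι R : Type*} [Fintype ι] [CommRing R]

/-- The squared norm of the tangential part of the tensor `T I k = ∂_I u_k`, all of whose derivative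
indices `I` are contracted with `Q^{ij} = δ^{ij} - N^i N^j`. -/
def tangentialSq [DecidableEq ι] (N : ι → R) {r : ℕ} (T : (Fin r → ι) → ι → R) : R :=
  ∑ k, (T · k) ⬝ᵥ tensorPower (tangentialProjection N) r *ᵥ (T · k)

/-- The squared norm of the divergence of the tensor `T I k = ∂_I u_k`, taken in the last, that is,
innermost derivative index. -/
def divSq {r : ℕ} (T : (Fin (r + 1) → ι) → ι → R) : R :=
  ∑ I : Fin r → ι, (∑ i, T (Fin.snoc I i) i) ^ 2

/-- The squared norm of the curl of the tensor `T I k = ∂_I u_k`, taken in the last, that is,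
innermost derivative index. -/
def curlSq {r : ℕ} (T : (Fin (r + 1) → ι) → ι → R) : R :=
  ∑ I : Fin r → ι, ∑ i, ∑ j, (T (Fin.snoc I i) j - T (Fin.snoc I j) i) ^ 2

theorem sum_cons {M : Type*} [AddCommMonoid M] {r : ℕ} (f : (Fin (r + 1) → ι) → M) :
    ∑ I, f I = ∑ i, ∑ I : Fin r → ι, f (Fin.cons i I) := by
  rw [← (Fin.consEquiv fun _ => ι).sum_comp f, Fintype.sum_prod_type]
  rfl

theorem divSq_eq_sum_cons {r : ℕ} (T : (Fin (r + 2) → ι) → ι → R) :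
    divSq T = ∑ i, divSq fun I => T (Fin.cons i I) := by
  simp only [divSq, sum_cons (r := r), Fin.cons_snoc_eq_snoc_cons]

theorem curlSq_eq_sum_cons {r : ℕ} (T : (Fin (r + 2) → ι) → ι → R) :
    curlSq T = ∑ i, curlSq fun I => T (Fin.cons i I) := by
  simp only [curlSq, sum_cons (r := r), Fin.cons_snoc_eq_snoc_cons]

variable [DecidableEq ι]

theorem tangentialSq_zero (N : ι → R) (T : (Fin 0 → ι) → ι → R) :
    tangentialSq N T = ∑ I, ∑ k, T I k ^ 2 := by
  simp only [tangentialSq, tensorPower_zero, one_mulVec, dotProduct, ← sq]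
  exact Finset.sum_comm

theorem tangentialSq_succ (N : ι → R) {r : ℕ} (T : (Fin (r + 1) → ι) → ι → R) :
    tangentialSq N T = ∑ k, (fun p : ι × (Fin r → ι) => T (Fin.cons p.1 p.2) k) ⬝ᵥ
      (tangentialProjection N ⊗ₖ tensorPower (tangentialProjection N) r) *ᵥ
        fun p => T (Fin.cons p.1 p.2) k := by
  refine Finset.sum_congr rfl fun k _ => ?_
  let e := Fin.consEquiv fun _ : Fin (r + 1) => ι
  change _ = ((T · k) ∘ e) ⬝ᵥ _ *ᵥ ((T · k) ∘ e)
  rw [← tensorPower_succ, submatrix_mulVec_equiv, Function.comp_assoc, e.self_comp_symm,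
    Function.comp_id, comp_equiv_dotProduct_comp_equiv]

theorem tangentialSq_eq_sum (N : ι → R) {r : ℕ} (T : (Fin r → ι) → ι → R) :
    tangentialSq N T = ∑ k, ∑ I : Fin r → ι, ∑ J : Fin r → ι,
      (∏ m, ((if I m = J m then (1 : R) else 0) - N (I m) * N (J m))) * T I k * T J k := by
  simp only [tangentialSq, dotProduct, mulVec, tensorPower, of_apply, tangentialProjection_apply,
    Finset.mul_sum]
  refine Finset.sum_congr rfl fun k _ => Finset.sum_congr rfl fun I _ =>
    Finset.sum_congr rfl fun J _ => ?_
  ring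

variable [LinearOrder R] [IsStrictOrderedRing R] {N : ι → R}

theorem tangentialSq_nonneg (hN : ∑ i, N i ^ 2 = 1) {r : ℕ} (T : (Fin r → ι) → ι → R) :
    0 ≤ tangentialSq N T := by
  refine Finset.sum_nonneg fun k _ => ?_
  rw [← sum_mulVec_sq (isSymm_tensorPower (isSymm_tangentialProjection N) r)
    (isIdempotentElem_tensorPower (isIdempotentElem_tangentialProjection hN) r)]
  positivity

theorem sum_tangentialSq_cons_le (hN : ∑ i, N i ^ 2 = 1) {r : ℕ}
    {T : (Fin (r + 1) → ι) → ι → R} (hT : IsSymmTensor T) :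
    ∑ i, tangentialSq N (fun I => T (Fin.cons i I)) ≤
      (4 * Fintype.card ι + 4) * (tangentialSq N T + divSq T + curlSq T) := by
  rw [tangentialSq_succ]
  simp only [divSq, curlSq, hT.apply_snoc]
  exact slot_div_curl_estimate hN (isSymm_tensorPower (isSymm_tangentialProjection N) r)
    (isIdempotentElem_tensorPower (isIdempotentElem_tangentialProjection hN) r)
    fun p => T (Fin.cons p.1 p.2)

theorem tensor_div_curl_estimate (hN : ∑ i, N i ^ 2 = 1) {r : ℕ}
    {T : (Fin (r + 1) → ι) → ι → R} (hT : IsSymmTensor T) :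
    ∑ I, ∑ k, T I k ^ 2 ≤
      (4 * Fintype.card ι + 5) ^ (r + 1) * (tangentialSq N T + divSq T + curlSq T) := by
  set c : R := 4 * Fintype.card ι + 4 with hc
  have hc_succ : (4 * Fintype.card ι + 5 : R) = c + 1 := by rw [hc]; ring
  have hc_nonneg : 0 ≤ c := by positivity
  rw [hc_succ]
  induction r with
  | zero =>
    have h_tan := tangentialSq_nonneg hN T
    have h_div : 0 ≤ divSq T := by unfold divSq; positivity
    have h_curl : 0 ≤ curlSq T := by unfold curlSq; positivity
    calc ∑ I, ∑ k, T I k ^ 2 = ∑ i, tangentialSq N fun I => T (Fin.cons i I) := by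
          simp only [sum_cons (r := 0), tangentialSq_zero]
      _ ≤ c * (tangentialSq N T + divSq T + curlSq T) := sum_tangentialSq_cons_le hN hT
      _ ≤ (c + 1) ^ 1 * (tangentialSq N T + divSq T + curlSq T) := by
          rw [pow_one]; gcongr; linarith
  | succ r ih =>
    have h_tan := tangentialSq_nonneg hN T
    calc ∑ I, ∑ k, T I k ^ 2 = ∑ i, ∑ I, ∑ k, T (Fin.cons i I) k ^ 2 := sum_cons _
      _ ≤ ∑ i, (c + 1) ^ (r + 1) * (tangentialSq N (fun I => T (Fin.cons i I)) +
            divSq (fun I => T (Fin.cons i I)) + curlSq fun I => T (Fin.cons i I)) :=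
          Finset.sum_le_sum fun i _ => ih (hT.cons i)
      _ = (c + 1) ^ (r + 1) *
            (∑ i, tangentialSq N (fun I => T (Fin.cons i I)) + divSq T + curlSq T) := by
          rw [divSq_eq_sum_cons, curlSq_eq_sum_cons, ← Finset.mul_sum, Finset.sum_add_distrib,
            Finset.sum_add_distrib]
      _ ≤ (c + 1) ^ (r + 1) * ((c + 1) * (tangentialSq N T + divSq T + curlSq T)) := by
          refine mul_le_mul_of_nonneg_left ?_ (pow_nonneg (add_nonneg hc_nonneg zero_le_one) _)
          linarith [sum_tangentialSq_cons_le hN hT]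
      _ = (c + 1) ^ (r + 2) * (tangentialSq N T + divSq T + curlSq T) := by ring

end TensorEstimate

section IteratedPartialDerivatives

variable {n r : ℕ} {f g : (Fin n → ℝ) → ℝ} {x : Fin n → ℝ}

theorem contDiffAt_pd {m : ℕ∞ω} (i : Fin n) (hf : ContDiffAt ℝ (m + 1) f x) :
    ContDiffAt ℝ m (pd n i f) x :=
  (hf.fderiv_right le_rfl).clm_apply contDiffAt_const

theorem pd_pd_comm (i j : Fin n) (hf : ContDiffAt ℝ 2 f x) :
    pd n i (pd n j f) x = pd n j (pd n i f) x := by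
  have h_diff : DifferentiableAt ℝ (fderiv ℝ f) x :=
    (hf.fderiv_right (m := 1) (by norm_num)).differentiableAt one_ne_zero
  have h_second (a b : Fin n) :
      pd n a (pd n b f) x = fderiv ℝ (fderiv ℝ f) x (Pi.single a 1) (Pi.single b 1) := by
    change fderiv ℝ (fun y => fderiv ℝ f y (Pi.single b 1)) x (Pi.single a 1) = _
    rw [fderiv_clm_apply h_diff (differentiableAt_const _)]
    simp
  rw [h_second, h_second]
  exact hf.isSymmSndFDerivAt (by simp) _ _

theorem contDiffAt_foldr_pd {m : ℕ∞ω} (l : List (Fin n))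
    (hf : ContDiffAt ℝ (m + l.length) f x) : ContDiffAt ℝ m (l.foldr (pd n) f) x := by
  induction l generalizing m with
  | nil => simpa using hf
  | cons i l ih =>
    refine contDiffAt_pd i (ih ?_)
    rwa [List.length_cons, Nat.cast_succ, add_comm (l.length : ℕ∞ω), ← add_assoc] at hf

theorem foldr_pd_eventuallyEq_of_perm {l₁ l₂ : List (Fin n)} (h : l₁.Perm l₂)
    (hf : ContDiffAt ℝ l₁.length f x) : l₁.foldr (pd n) f =ᶠ[𝓝 x] l₂.foldr (pd n) f := by
  induction h with
  | nil => rfl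
  | cons i _ ih =>
    have h_fderiv := (ih (hf.of_le (by simp))).fderiv (𝕜 := ℝ)
    filter_upwards [h_fderiv] with y hy
    exact congrArg (· (Pi.single i 1)) hy
  | swap i j l =>
    have h_length : ((j :: i :: l).length : ℕ∞ω) = 2 + l.length := by
      rw [List.length_cons, List.length_cons, add_comm 2]
      rfl
    have h_smooth : ContDiffAt ℝ 2 (l.foldr (pd n) f) x := contDiffAt_foldr_pd l (h_length ▸ hf)
    filter_upwards [h_smooth.eventually (by simp)] with y hy
    exact pd_pd_comm j i hy
  | trans h₁₂ _ ih₁₂ ih₂₃ => exact (ih₁₂ hf).trans (ih₂₃ (h₁₂.length_eq ▸ hf))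

theorem pdm_eq_foldr_pd (I : Fin r → Fin n) (f : (Fin n → ℝ) → ℝ) :
    pdm n r I f = (List.ofFn I).foldr (pd n) f := by
  induction r with
  | zero => rfl
  | succ r ih =>
    rw [List.ofFn_succ, List.foldr_cons, ← ih]
    rfl

theorem pdm_comp_perm (I : Fin r → Fin n) (σ : Equiv.Perm (Fin r)) (hf : ContDiffAt ℝ r f x) :
    pdm n r (I ∘ σ) f x = pdm n r I f x := by
  rw [pdm_eq_foldr_pd, pdm_eq_foldr_pd]
  exact (foldr_pd_eventuallyEq_of_perm (σ.ofFn_comp_perm I)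
    (by rwa [List.length_ofFn])).eq_of_nhds

theorem pdm_snoc (I : Fin r → Fin n) (i : Fin n) (f : (Fin n → ℝ) → ℝ) :
    pdm n (r + 1) (Fin.snoc I i) f = pdm n r I (pd n i f) := by
  induction r with
  | zero => rfl
  | succ r ih =>
    rw [← Fin.cons_self_tail I, ← Fin.cons_snoc_eq_snoc_cons]
    exact congrArg (pd n (I 0)) (ih (Fin.tail I))

theorem pdm_eventuallyEq_iteratedFDeriv (I : Fin r → Fin n) (hf : ContDiffAt ℝ r f x) :
    pdm n r I f =ᶠ[𝓝 x] fun y => iteratedFDeriv ℝ r f y fun m => Pi.single (I m) 1 := by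
  induction r generalizing x with
  | zero => exact .of_forall fun y => rfl
  | succ r ih =>
    filter_upwards [hf.eventually (by simp)] with y hy
    have h_diff : DifferentiableAt ℝ (iteratedFDeriv ℝ r f) y :=
      hy.differentiableAt_iteratedFDeriv (by exact_mod_cast r.lt_succ_self)
    have h_tail := (ih (Fin.tail I) (hy.of_le (by exact_mod_cast r.le_succ))).fderiv_eq (𝕜 := ℝ)
    rw [iteratedFDeriv_succ_apply_left]
    change fderiv ℝ (pdm n r (Fin.tail I) f) y (Pi.single (I 0) 1) = _
    rw [h_tail, fderiv_continuousMultilinear_apply_const_apply h_diff]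
    rfl

theorem pdm_eq_iteratedFDeriv (I : Fin r → Fin n) (hf : ContDiffAt ℝ r f x) :
    pdm n r I f x = iteratedFDeriv ℝ r f x fun m => Pi.single (I m) 1 :=
  (pdm_eventuallyEq_iteratedFDeriv I hf).eq_of_nhds

theorem pdm_sub (I : Fin r → Fin n) (hf : ContDiffAt ℝ r f x) (hg : ContDiffAt ℝ r g x) :
    pdm n r I (fun y => f y - g y) x = pdm n r I f x - pdm n r I g x := by
  rw [pdm_eq_iteratedFDeriv I hf, pdm_eq_iteratedFDeriv I hg, pdm_eq_iteratedFDeriv I (hf.sub hg),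
    fun_iteratedFDeriv_sub_apply hf hg]
  rfl

theorem pdm_sum {κ : Type*} (s : Finset κ) {F : κ → (Fin n → ℝ) → ℝ} (I : Fin r → Fin n)
    (hF : ∀ k ∈ s, ContDiffAt ℝ r (F k) x) :
    pdm n r I (fun y => ∑ k ∈ s, F k y) x = ∑ k ∈ s, pdm n r I (F k) x := by
  rw [pdm_eq_iteratedFDeriv I (ContDiffAt.sum hF), iteratedFDeriv_fun_sum_apply hF,
    _root_.sum_apply]
  exact Finset.sum_congr rfl fun k hk => (pdm_eq_iteratedFDeriv I (hF k hk)).symm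

variable {u : (Fin n → ℝ) → Fin n → ℝ}

theorem divSq_pdm (hu : ContDiffAt ℝ (r + 1) u x) :
    divSq (fun I k => pdm n (r + 1) I (fun y => u y k) x) =
      ∑ I : Fin r → Fin n, pdm n r I (fun y => ∑ i, pd n i (fun z => u z i) y) x ^ 2 := by
  refine Finset.sum_congr rfl fun I _ => ?_
  rw [pdm_sum _ I fun i _ => contDiffAt_pd i (contDiffAt_pi.1 hu i)]
  simp only [pdm_snoc]

theorem curlSq_pdm (hu : ContDiffAt ℝ (r + 1) u x) :
    curlSq (fun I k => pdm n (r + 1) I (fun y => u y k) x) =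
      ∑ I : Fin r → Fin n, ∑ i, ∑ j,
        pdm n r I (fun y => pd n i (fun z => u z j) y - pd n j (fun z => u z i) y) x ^ 2 := by
  refine Finset.sum_congr rfl fun I _ => Finset.sum_congr rfl fun i _ =>
    Finset.sum_congr rfl fun j _ => ?_
  rw [pdm_sub I (contDiffAt_pd i (contDiffAt_pi.1 hu j)) (contDiffAt_pd j (contDiffAt_pi.1 hu i))]
  simp only [pdm_snoc]

end IteratedPartialDerivatives

end DivCurl

open DivCurl in
theorem pointwise_div_curl_estimate_general (n r : ℕ) (hr : 1 ≤ r)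
    (u : (Fin n → ℝ) → Fin n → ℝ) (N x : Fin n → ℝ) (hu : ContDiffAt ℝ r u x)
    (hN : ∑ i, N i ^ 2 = 1) :
    (∑ I : Fin r → Fin n, ∑ k, (pdm n r I (fun y => u y k) x)^2)
      ≤ (4 * n + 5) ^ r * ((∑ k, ∑ I : Fin r → Fin n, ∑ J : Fin r → Fin n,
            (∏ m, ((if I m = J m then (1:ℝ) else 0) - N (I m) * N (J m)))
              * pdm n r I (fun y => u y k) x * pdm n r J (fun y => u y k) x)
          + (∑ I : Fin (r-1) → Fin n,
              (pdm n (r-1) I (fun y => ∑ i, pd n i (fun z => u z i) y) x)^2)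
          + (∑ I : Fin (r-1) → Fin n, ∑ i, ∑ j,
              (pdm n (r-1) I
                (fun y => pd n i (fun z => u z j) y - pd n j (fun z => u z i) y) x)^2)) := by
  obtain ⟨s, rfl⟩ := Nat.exists_eq_add_of_le' hr
  have h_symm : IsSymmTensor fun I k => pdm n (s + 1) I (fun y => u y k) x :=
    fun σ I => funext fun k => pdm_comp_perm I σ (contDiffAt_pi.1 hu k)
  have h := tensor_div_curl_estimate hN h_symm
  rwa [tangentialSq_eq_sum, divSq_pdm hu, curlSq_pdm hu, Fintype.card_fin] at h

/-- Pointwise estimate of the full r-th derivative of a vector field u by the tangentially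
projected derivatives (with projection Q^{ij} = δ^{ij} − N^iN^j for a unit vector N) together
with ∇^{r−1}div u and ∇^{r−1}curl u. -/
theorem pointwise_div_curl_estimate (n r : ℕ) (hr : 1 ≤ r) :
    ∃ C > 0, ∀ (u : (Fin n → ℝ) → Fin n → ℝ) (N : Fin n → ℝ),
      ContDiff ℝ (⊤ : ℕ∞) u → (∑ i, (N i)^2) = 1 →
      ∀ x : Fin n → ℝ,
        (∑ I : Fin r → Fin n, ∑ k, (pdm n r I (fun y => u y k) x)^2)
          ≤ C * ((∑ k, ∑ I : Fin r → Fin n, ∑ J : Fin r → Fin n,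
                (∏ m, ((if I m = J m then (1:ℝ) else 0) - N (I m) * N (J m)))
                  * pdm n r I (fun y => u y k) x * pdm n r J (fun y => u y k) x)
              + (∑ I : Fin (r-1) → Fin n,
                  (pdm n (r-1) I (fun y => ∑ i, pd n i (fun z => u z i) y) x)^2)
              + (∑ I : Fin (r-1) → Fin n, ∑ i, ∑ j,
                  (pdm n (r-1) I
                    (fun y => pd n i (fun z => u z j) y - pd n j (fun z => u z i) y) x)^2)) :=
  ⟨(4 * n + 5) ^ r, by positivity, fun u N hu hN x =>
    pointwise_div_curl_estimate_general n r hr u N x (hu.contDiffAt.of_le (mod_cast le_top)) hN⟩
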